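/- Let μ ∈ ℝ, σ > 0, and a ∈ ℝ. If X is a real random variable with Gaussian distribution N(μ, σ²), then the expected improvement E[max(a − X, 0)] has the closed form E[max(a − X, 0)] = (a − μ) Φ((a − μ)/σ) + σ φ((a − μ)/σ), where Φ is the cumulative distribution function and φ the probability density function of the standard normal distribution N(0,1). -/

import Mathlib

/-!
Standardizing, `X = μ + σ Z` with `Z ∼ N(0, 1)`, and `max (a - X) 0` vanishes unless
`Z ≤ c := (a - μ) / σ`. The expectation is therefore `∫_{z ≤ c} ((a - μ) - σ z) φ(z) dz`.
The first term contributes `(a - μ) Φ(c)`; the second is `-σ ∫_{z ≤ c} z φ(z) dz = σ φ(c)`,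
because the derivative of `φ` is `-z φ(z)` and `φ` vanishes at `-∞` (`integral_Iic_mul_stdPDF`).
-/

open MeasureTheory ProbabilityTheory Filter Topology

/-- The density of the standard normal distribution. -/
noncomputable def stdPDF (z : ℝ) : ℝ :=
  (Real.sqrt (2 * Real.pi))⁻¹ * Real.exp (-z ^ 2 / 2)

lemma gaussianPDFReal_zero_one (z : ℝ) : gaussianPDFReal 0 1 z = stdPDF z := by
  simp [gaussianPDFReal, stdPDF]

lemma integrable_stdPDF : Integrable stdPDF := by
  have h := integrable_gaussianPDFReal 0 1
  rwa [show gaussianPDFReal 0 1 = stdPDF from funext gaussianPDFReal_zero_one] at h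

lemma integrable_mul_stdPDF : Integrable (fun z => z * stdPDF z) := by
  have h := (integrable_mul_exp_neg_mul_sq (b := 1 / 2) (by norm_num)).const_mul
    (Real.sqrt (2 * Real.pi))⁻¹
  refine h.congr (Eventually.of_forall fun z => ?_)
  simp only [stdPDF]
  rw [show -(1 / 2 : ℝ) * z ^ 2 = -z ^ 2 / 2 by ring]
  ring

lemma hasDerivAt_stdPDF (z : ℝ) : HasDerivAt stdPDF (-(z * stdPDF z)) z := by
  have h : HasDerivAt (fun z : ℝ => -z ^ 2 / 2) (-z) z := by
    refine ((hasDerivAt_pow 2 z).fun_neg.div_const 2).congr_deriv ?_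
    norm_num
    ring
  refine (h.exp.const_mul (Real.sqrt (2 * Real.pi))⁻¹).congr_deriv ?_
  simp only [stdPDF]
  ring

lemma tendsto_stdPDF_atBot : Tendsto stdPDF atBot (𝓝 0) := by
  have h : Tendsto (fun z : ℝ => -z ^ 2 / 2) atBot atBot := by
    have h2 : Tendsto (fun z : ℝ => z ^ 2) atBot atTop := by
      simpa [Function.comp_def] using
        (tendsto_pow_atTop (α := ℝ) two_ne_zero).comp tendsto_neg_atBot_atTop
    exact (tendsto_neg_atTop_atBot.comp h2).atBot_div_const (by norm_num)
  have := (Real.tendsto_exp_atBot.comp h).const_mul (Real.sqrt (2 * Real.pi))⁻¹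
  rwa [mul_zero] at this

lemma integral_Iic_mul_stdPDF (c : ℝ) : ∫ z in Set.Iic c, z * stdPDF z = -stdPDF c := by
  have h := integral_Iic_of_hasDerivAt_of_tendsto' (a := c)
    (fun z _ => hasDerivAt_stdPDF z) integrable_mul_stdPDF.neg.integrableOn
    tendsto_stdPDF_atBot
  rw [integral_neg] at h
  linarith

lemma gaussianReal_eq_map_std (μ σ : ℝ) :
    gaussianReal μ ⟨σ ^ 2, sq_nonneg σ⟩ = (gaussianReal 0 1).map (fun z => μ + σ * z) := by
  have h : (fun z : ℝ => μ + σ * z) = (fun x => μ + x) ∘ (fun z => σ * z) := rfl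
  rw [h, ← Measure.map_map (by fun_prop) (by fun_prop), gaussianReal_map_const_mul,
    gaussianReal_map_const_add]
  simp only [mul_zero, zero_add, mul_one]
  rfl

/-- Closed form of the expected improvement for a Gaussian random variable
`X ∼ N(μ, σ²)` and current best value `a`:
`E[max(a - X, 0)] = (a - μ) Φ((a - μ)/σ) + σ φ((a - μ)/σ)`, where
`φ(z) = (2π)^{-1/2} e^{-z²/2}` is the standard normal density and
`Φ(z) = ∫_{-∞}^{z} φ(u) du` its cumulative distribution function. -/
theorem expected_improvement_closed_form
    (μ a σ : ℝ) (hσ : 0 < σ) :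
    ∫ x, max (a - x) 0 ∂(ProbabilityTheory.gaussianReal μ ⟨σ ^ 2, sq_nonneg σ⟩) =
      (a - μ) * (∫ u in Set.Iic ((a - μ) / σ),
          (Real.sqrt (2 * Real.pi))⁻¹ * Real.exp (-u ^ 2 / 2)) +
        σ * ((Real.sqrt (2 * Real.pi))⁻¹ * Real.exp (-((a - μ) / σ) ^ 2 / 2)) := by
  change _ = (a - μ) * (∫ u in Set.Iic ((a - μ) / σ), stdPDF u) + σ * stdPDF ((a - μ) / σ)
  rw [gaussianReal_eq_map_std, integral_map (by fun_prop) (by fun_prop),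
    integral_gaussianReal_eq_integral_smul one_ne_zero]
  have h : ∀ z, gaussianPDFReal 0 1 z • max (a - (μ + σ * z)) 0 =
      (Set.Iic ((a - μ) / σ)).indicator
        (fun z => (a - μ) * stdPDF z - σ * (z * stdPDF z)) z := by
    intro z
    rw [gaussianPDFReal_zero_one, smul_eq_mul]
    by_cases hz : z ≤ (a - μ) / σ
    · rw [Set.indicator_of_mem (Set.mem_Iic.2 hz), max_eq_left]
      · ring
      · rw [le_div_iff₀ hσ] at hz
        linarith
    · rw [Set.indicator_of_notMem (by simpa using hz), max_eq_right, mul_zero]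
      rw [not_le, div_lt_iff₀ hσ] at hz
      linarith
  simp_rw [h]
  rw [integral_indicator measurableSet_Iic,
    integral_sub (integrable_stdPDF.const_mul _).integrableOn
      (integrable_mul_stdPDF.const_mul _).integrableOn,
    integral_const_mul, integral_const_mul, integral_Iic_mul_stdPDF]
  ring
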